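/- For all integers i, j and every integer k ≥ 1, the bimoment determinants satisfy the bilinear identity G_{k+1}^{(i,j)} F_{k−1}^{(i+1,j)} = G_k^{(i,j)} F_k^{(i+1,j)} − G_k^{(i+1,j)} F_k^{(i,j)}. -/

import Mathlib

open Finset

/-- Single moments `α_i = Σ_p ζ_p^i a_p`. -/
noncomputable def alphaM (n : ℕ) (ζ a : Fin n → ℝ) (i : ℤ) : ℝ :=
  ∑ p : Fin n, ζ p ^ i * a p

/-- Bimoments `I_{i,j} = Σ_p Σ_q ζ_p^i ζ_q^j / (ζ_p + ζ_q) a_p a_q`. -/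
noncomputable def Imom (n : ℕ) (ζ a : Fin n → ℝ) (i j : ℤ) : ℝ :=
  ∑ p : Fin n, ∑ q : Fin n, ζ p ^ i * ζ q ^ j / (ζ p + ζ q) * (a p * a q)

/-- `F_k^{(i,j)} = det (I_{i+r,j+s})_{0 ≤ r,s ≤ k-1}`, with `F_0 = 1` and `F_k = 0` for `k < 0`. -/
noncomputable def Fdet (n : ℕ) (ζ a : Fin n → ℝ) (i j k : ℤ) : ℝ :=
  if k < 0 then 0
  else Matrix.det (Matrix.of fun r s : Fin k.toNat =>
    Imom n ζ a (i + ((r : ℕ) : ℤ)) (j + ((s : ℕ) : ℤ)))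

/-- `G_k^{(i,j)}`: first column `(α_{i-1}, …, α_{i+k-2})ᵀ`, remaining block
`(I_{i+r,j+s})_{0 ≤ r ≤ k-1, 0 ≤ s ≤ k-2}`; `G_1 = α_{i-1}` and `G_k = 0` for `k < 1`. -/
noncomputable def Gdet (n : ℕ) (ζ a : Fin n → ℝ) (i j k : ℤ) : ℝ :=
  if k < 1 then 0
  else Matrix.det (Matrix.of fun r s : Fin k.toNat =>
    if (s : ℕ) = 0 then alphaM n ζ a (i - 1 + ((r : ℕ) : ℤ))
    else Imom n ζ a (i + ((r : ℕ) : ℤ)) (j + (((s : ℕ) - 1 : ℕ) : ℤ)))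

/-- `E_k^{(i,j)}`: `(1,1)` entry `0`, first row `(0, α_{j-1}, …, α_{j+k-3})`, first column
`(0, α_{i-1}, …, α_{i+k-3})ᵀ`, remaining block `(I_{i+r,j+s})_{0 ≤ r,s ≤ k-2}`;
`E_k = 0` for `k < 2`. -/
noncomputable def Edet (n : ℕ) (ζ a : Fin n → ℝ) (i j k : ℤ) : ℝ :=
  if k < 2 then 0
  else Matrix.det (Matrix.of fun r s : Fin k.toNat =>
    if (r : ℕ) = 0 then
      (if (s : ℕ) = 0 then 0 else alphaM n ζ a (j - 1 + (((s : ℕ) - 1 : ℕ) : ℤ)))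
    else if (s : ℕ) = 0 then alphaM n ζ a (i - 1 + (((r : ℕ) - 1 : ℕ) : ℤ))
    else Imom n ζ a (i + (((r : ℕ) - 1 : ℕ) : ℤ)) (j + (((s : ℕ) - 1 : ℕ) : ℤ)))

/-!
The matrix of `G_{k+1}^{(i,j)}` is a column of single moments followed by `k` columns of bimoments.
Deleting its first or last row together with its first or last column leaves the matrices of
`F_k^{(i+1,j)}`, `F_k^{(i,j)}`, `G_k^{(i+1,j)}` and `G_k^{(i,j)}`, and deleting both of these rows
and columns leaves that of `F_{k-1}^{(i+1,j)}`. The identity is therefore the Desnanot–Jacobi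
identity for this matrix, and it holds for arbitrary arrays in a commutative ring. Desnanot–Jacobi
in turn is Jacobi's formula for the `2 × 2` minor of the adjugate on the first and the last index.
-/

section Jacobi

open Matrix

variable {R m n : Type*} [CommRing R] [Fintype m] [DecidableEq m] [Fintype n] [DecidableEq n]

theorem det_mul_det_toBlocks₁₁_adjugate (M : Matrix (m ⊕ n) (m ⊕ n) R) :
    M.det * M.adjugate.toBlocks₁₁.det = M.det ^ Fintype.card m * M.toBlocks₂₂.det := by
  have mul_adjugate_firstCols :
      M * fromBlocks M.adjugate.toBlocks₁₁ 0 M.adjugate.toBlocks₂₁ 1 =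
        fromBlocks (M.det • 1) M.toBlocks₁₂ 0 M.toBlocks₂₂ := by
    have h := M.mul_adjugate
    rw [← fromBlocks_toBlocks M.adjugate, ← fromBlocks_one, fromBlocks_smul] at h
    nth_rewrite 1 [← fromBlocks_toBlocks M] at h ⊢
    rw [fromBlocks_multiply, fromBlocks_inj] at h
    rw [fromBlocks_multiply, h.1, h.2.2.1]
    simp
  simpa using congrArg det mul_adjugate_firstCols

theorem det_toBlocks₁₁_adjugate [Nonempty m] (M : Matrix (m ⊕ n) (m ⊕ n) R) :
    M.adjugate.toBlocks₁₁.det = M.det ^ (Fintype.card m - 1) * M.toBlocks₂₂.det := by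
  -- It suffices to treat the generic matrix, whose determinant can be cancelled.
  let X := mvPolynomialX (m ⊕ n) (m ⊕ n) ℤ
  have generic : X.adjugate.toBlocks₁₁.det =
      X.det ^ (Fintype.card m - 1) * X.toBlocks₂₂.det := by
    apply mul_left_cancel₀ (det_mvPolynomialX_ne_zero (m ⊕ n) ℤ)
    rw [det_mul_det_toBlocks₁₁_adjugate, ← mul_assoc, mul_pow_sub_one Fintype.card_ne_zero]
  let f : MvPolynomial ((m ⊕ n) × (m ⊕ n)) ℤ →ₐ[ℤ] R := MvPolynomial.aeval fun p => M p.1 p.2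
  have map_X : f.mapMatrix X = M := mvPolynomialX_mapMatrix_aeval ℤ M
  have map_adjugate_block : f.mapMatrix X.adjugate.toBlocks₁₁ = M.adjugate.toBlocks₁₁ := by
    rw [← map_X, ← AlgHom.map_adjugate]
    rfl
  have map_block : f.mapMatrix X.toBlocks₂₂ = M.toBlocks₂₂ := by
    rw [← map_X]
    rfl
  simpa only [map_mul, map_pow, AlgHom.map_det, map_X, map_adjugate_block, map_block]
    using congrArg f generic

end Jacobi

section Desnanot

/-- The equivalence listing the two extreme indices of `Fin (m + 2)` before the interior ones. It
puts the minor on the extreme indices into the first block. -/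
noncomputable def extremesSumInteriorEquiv (m : ℕ) : Fin 2 ⊕ Fin m ≃ Fin (m + 2) :=
  Equiv.ofBijective (Sum.elim ![0, Fin.last (m + 1)] (Fin.succ ∘ Fin.castSucc)) <| by
    refine (Fintype.bijective_iff_injective_and_card _).2
      ⟨Function.Injective.sumElim ?_ ?_ ?_, by simp [add_comm]⟩
    · exact injective_pair_iff_ne.2 Fin.last_pos.ne
    · exact (Fin.succ_injective _).comp (Fin.castSucc_injective _)
    · exact Fin.forall_fin_two.2 ⟨fun r => (Fin.succ_ne_zero r.castSucc).symm, fun r h =>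
        r.castSucc_ne_last (Fin.succ_injective _ (h.symm.trans (Fin.succ_last m).symm))⟩

variable {R : Type*} [CommRing R] {m : ℕ}

theorem det_mul_det_submatrix_interior (M : Matrix (Fin (m + 2)) (Fin (m + 2)) R) :
    M.det * (M.submatrix (Fin.succ ∘ Fin.castSucc) (Fin.succ ∘ Fin.castSucc)).det =
      (M.submatrix Fin.castSucc Fin.castSucc).det * (M.submatrix Fin.succ Fin.succ).det -
        (M.submatrix Fin.succ Fin.castSucc).det * (M.submatrix Fin.castSucc Fin.succ).det := by
  let e := extremesSumInteriorEquiv m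
  have jacobi : M.adjugate 0 0 * M.adjugate (Fin.last _) (Fin.last _) -
      M.adjugate 0 (Fin.last _) * M.adjugate (Fin.last _) 0 =
        M.det * (M.submatrix (Fin.succ ∘ Fin.castSucc) (Fin.succ ∘ Fin.castSucc)).det := by
    have h := det_toBlocks₁₁_adjugate (M.submatrix e e)
    rw [Matrix.det_submatrix_equiv_self, Matrix.adjugate_submatrix_equiv_self,
      Matrix.det_fin_two, Fintype.card_fin, pow_one] at h
    exact h
  have sign_mul_sign : (-1 : R) ^ (m + 1) * (-1) ^ (m + 1) = 1 := by simp [← mul_pow]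
  simp only [Matrix.adjugate_fin_succ_eq_det_submatrix, Fin.succAbove_zero, Fin.succAbove_last,
    Fin.val_zero, Fin.val_last, add_zero, zero_add, pow_zero, one_mul, pow_add _ (m + 1) (m + 1),
    sign_mul_sign] at jacobi
  linear_combination -jacobi - (M.submatrix Fin.succ Fin.castSucc).det *
    (M.submatrix Fin.castSucc Fin.succ).det * sign_mul_sign

end Desnanot

section Blocks

variable {R : Type*}

/-- The block of the array `A` on the `k` consecutive rows from `i` and the `k` consecutive columns
from `j`. For the bimoments its determinant is `F_k^{(i,j)}`. -/
def contiguousBlock (A : ℤ → ℤ → R) (i j : ℤ) (k : ℕ) : Matrix (Fin k) (Fin k) R :=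
  Matrix.of fun r s => A (i + (r : ℕ)) (j + (s : ℕ))

/-- The matrix of size `k + 1` with first column `c (i - 1), …, c (i - 1 + k)` and with the entries
of `A` on the rows `i, …, i + k` and the columns `j, …, j + k - 1` as its other columns. For the
moments its determinant is `G_{k+1}^{(i,j)}`: here `k` counts the columns taken from `A`. -/
def borderedBlock (c : ℤ → R) (A : ℤ → ℤ → R) (i j : ℤ) (k : ℕ) :
    Matrix (Fin (k + 1)) (Fin (k + 1)) R :=
  Matrix.of fun r => Fin.cons (c (i - 1 + (r : ℕ))) fun s : Fin k => A (i + (r : ℕ)) (j + (s : ℕ))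

variable (c : ℤ → R) (A : ℤ → ℤ → R) (i j : ℤ) (k : ℕ)

theorem contiguousBlock_submatrix_castSucc_castSucc :
    (contiguousBlock A i j (k + 1)).submatrix Fin.castSucc Fin.castSucc =
      contiguousBlock A i j k :=
  rfl

theorem borderedBlock_submatrix_castSucc_succ :
    (borderedBlock c A i j k).submatrix Fin.castSucc Fin.succ = contiguousBlock A i j k :=
  rfl

theorem borderedBlock_submatrix_succ_succ :
    (borderedBlock c A i j k).submatrix Fin.succ Fin.succ = contiguousBlock A (i + 1) j k := by
  ext r s
  simp [borderedBlock, contiguousBlock, add_assoc, add_comm (1 : ℤ)]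

theorem borderedBlock_submatrix_castSucc_castSucc :
    (borderedBlock c A i j (k + 1)).submatrix Fin.castSucc Fin.castSucc =
      borderedBlock c A i j k := by
  ext r s
  cases s using Fin.cases <;> rfl

theorem borderedBlock_submatrix_succ_castSucc :
    (borderedBlock c A i j (k + 1)).submatrix Fin.succ Fin.castSucc =
      borderedBlock c A (i + 1) j k := by
  have row_shift (x : ℤ) : i + (x + 1) = i + 1 + x := by ring
  have border_shift (x : ℤ) : i - 1 + (x + 1) = i + x := by ring
  ext r s
  cases s using Fin.cases <;> simp [borderedBlock, row_shift, border_shift]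

end Blocks

theorem stmt_5_general {R : Type*} [CommRing R] (c : ℤ → R) (A : ℤ → ℤ → R) (i j : ℤ) (k : ℕ) :
    (borderedBlock c A i j (k + 1)).det * (contiguousBlock A (i + 1) j k).det =
      (borderedBlock c A i j k).det * (contiguousBlock A (i + 1) j (k + 1)).det -
        (borderedBlock c A (i + 1) j k).det * (contiguousBlock A i j (k + 1)).det := by
  simpa only [← Matrix.submatrix_submatrix, borderedBlock_submatrix_succ_succ,
    contiguousBlock_submatrix_castSucc_castSucc, borderedBlock_submatrix_castSucc_castSucc,
    borderedBlock_submatrix_succ_castSucc, borderedBlock_submatrix_castSucc_succ]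
    using det_mul_det_submatrix_interior (borderedBlock c A i j (k + 1))

section Moments

variable (n : ℕ) (ζ a : Fin n → ℝ) (i j : ℤ) (k : ℕ)

theorem Fdet_natCast : Fdet n ζ a i j k = (contiguousBlock (Imom n ζ a) i j k).det := by
  simp [Fdet, contiguousBlock]

theorem Gdet_natCast_add_one :
    Gdet n ζ a i j (k + 1) = (borderedBlock (alphaM n ζ a) (Imom n ζ a) i j k).det := by
  rw [Gdet, if_neg (by omega), Int.toNat_natCast_add_one, borderedBlock]
  congr 2 with r s
  cases s using Fin.cases <;> simp

end Moments

/-- Lemma 2.8, identity (2.14): for all `i, j ∈ ℤ` and `k ≥ 1`,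
`G_{k+1}^{(i,j)} F_{k-1}^{(i+1,j)} = G_k^{(i,j)} F_k^{(i+1,j)} - G_k^{(i+1,j)} F_k^{(i,j)}`. -/
theorem stmt_5 (n : ℕ) (hn : 1 ≤ n) (ζ a : Fin n → ℝ)
    (hζ0 : ∀ p, 0 < ζ p) (hζmono : StrictMono ζ) (ha : ∀ p, 0 < a p)
    (i j k : ℤ) (hk : 1 ≤ k) :
    Gdet n ζ a i j (k + 1) * Fdet n ζ a (i + 1) j (k - 1) =
      Gdet n ζ a i j k * Fdet n ζ a (i + 1) j k -
        Gdet n ζ a (i + 1) j k * Fdet n ζ a i j k := by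
  obtain ⟨m, rfl⟩ := Int.le.dest hk
  simpa only [← Fdet_natCast, ← Gdet_natCast_add_one, Nat.cast_add_one, add_comm (1 : ℤ),
    add_sub_cancel_right] using stmt_5_general (alphaM n ζ a) (Imom n ζ a) i j m
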